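/- Let (G,·) be a group and θ ∈ Aut(G) with θ^{n-1} = id, and (G,f) = der_θ(G,·). Then there is an injective group homomorphism α : Aut(G,f) → Aut(ℤ_{n-1} ⋉ G), where ℤ_{n-1} acts on G via i·x = θ^i(x), given by α(R_u φ)(i,x) = (i, u⁻¹φ(x)u·δ(i,u)). -/

import Mathlib

/-- The `n`-ary operation of `der_θ(G,·)`. -/
def derF {G : Type*} [Group G] (n : ℕ) (θ : MulAut G) (x : Fin n → G) : G :=
  (List.ofFn fun i : Fin n => (θ ^ (i : ℕ)) (x i)).prod

/-- `δ(i,u) = θ(u)·θ²(u)⋯θ^i(u)`. -/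
def delta {G : Type*} [Group G] (θ : MulAut G) (k : ℕ) (u : G) : G :=
  (List.ofFn fun t : Fin k => (θ ^ ((t : ℕ) + 1)) u).prod

/-- Multiplication of `ℤ_{n-1} ⋉ G` where `i` acts by `θ^i`. -/
def sdMul {G : Type*} [Group G] (n : ℕ) (θ : MulAut G) (p q : ZMod (n - 1) × G) :
    ZMod (n - 1) × G :=
  (p.1 + q.1, p.2 * (θ ^ p.1.val) q.2)

/-- `α(R_u φ)(i,x) = (i, u⁻¹·φ(x)·u·δ(i,u))`. -/
def alphaMap {G : Type*} [Group G] (n : ℕ) (θ φ : MulAut G) (u : G)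
    (p : ZMod (n - 1) × G) : ZMod (n - 1) × G :=
  (p.1, u⁻¹ * φ p.2 * u * delta θ p.1.val u)

theorem delta_zero' {G : Type*} [Group G] (θ : MulAut G) (u : G) : delta θ 0 u = 1 := by
  simp [delta]

theorem delta_succ' {G : Type*} [Group G] (θ : MulAut G) (k : ℕ) (u : G) :
    delta θ (k + 1) u = delta θ k u * (θ ^ (k + 1)) u := by
  unfold delta
  rw [List.ofFn_succ', List.concat_eq_append, List.prod_append]
  simp

theorem delta_add' {G : Type*} [Group G] (θ : MulAut G) (i j : ℕ) (u : G) :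
    delta θ (i + j) u = delta θ i u * (θ ^ i) (delta θ j u) := by
  induction j with
  | zero => simp [delta_zero']
  | succ j ih =>
    rw [← add_assoc, delta_succ', ih, delta_succ', map_mul, ← MulAut.mul_apply _ (θ ^ i), ← pow_add,
      mul_assoc, add_assoc]

theorem delta_one_of_idem {G : Type*} [Group G] (m : ℕ) (θ : MulAut G) (u : G)
    (h : derF (m + 1) θ (fun _ => u) = u) : delta θ m u = 1 := by
  unfold derF at h
  rw [List.ofFn_succ, List.prod_cons] at h
  simpa [delta] using h

theorem delta_mod' {G : Type*} [Group G] (m : ℕ) (θ : MulAut G) (u : G)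
    (hθ : θ ^ m = 1) (h : delta θ m u = 1) (k : ℕ) : delta θ (k % m) u = delta θ k u := by
  have h2 : ∀ q, delta θ (m * q) u = 1 := by
    intro q
    induction q with
    | zero => simp [delta_zero']
    | succ q ih => rw [Nat.mul_succ, delta_add', ih, h]; simp
  conv_rhs => rw [← Nat.mod_add_div k m, delta_add', h2]
  simp

theorem phi_theta {G : Type*} [Group G] (θ φ : MulAut G) (u : G)
    (h : φ * θ * φ⁻¹ * θ⁻¹ = MulAut.conj u) (y : G) : φ (θ y) = u * θ (φ y) * u⁻¹ := by
  have := congrArg (fun f : MulAut G => f (θ (φ y))) h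
  simpa [MulAut.mul_apply] using this

theorem phi_theta_pow {G : Type*} [Group G] (θ φ : MulAut G) (u : G)
    (h : φ * θ * φ⁻¹ * θ⁻¹ = MulAut.conj u) (i : ℕ) (y : G) :
    φ ((θ ^ i) y) = u * delta θ i u * (θ ^ i) (u⁻¹ * φ y * u) * (delta θ i u)⁻¹ * u⁻¹ := by
  induction i generalizing y with
  | zero => simp [delta_zero']; group
  | succ i ih =>
    rw [pow_succ, MulAut.mul_apply, ih, phi_theta θ φ u h, delta_succ']
    simp only [pow_succ, MulAut.mul_apply, map_mul, map_inv]
    group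

theorem phi_delta {G : Type*} [Group G] (θ φ : MulAut G) (u v : G)
    (h : φ * θ * φ⁻¹ * θ⁻¹ = MulAut.conj u) (i : ℕ) :
    φ (delta θ i v) * u * delta θ i u = u * delta θ i (φ v * u) := by
  induction i with
  | zero => simp [delta_zero']
  | succ i ih =>
    rw [delta_succ' θ i (φ v * u), ← mul_assoc, ← ih, delta_succ', map_mul,
      phi_theta_pow θ φ u h, delta_succ']
    simp only [map_mul, map_inv]
    group

/-- Let `(G,f) = der_θ(G,·)` with `θ^{n-1} = id`.  Writing each `Λ ∈ Aut(G,f)`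
uniquely as `R_u φ` with `u` idempotent and `[φ,θ] = I_u`, the assignment
`α(R_u φ)(i,x) = (i, u⁻¹φ(x)u·δ(i,u))` is an injective group homomorphism
`Aut(G,f) → Aut(ℤ_{n-1} ⋉ G)`: each `α(R_u φ)` is an automorphism of
`ℤ_{n-1} ⋉ G`, `α` is multiplicative, and `α` is injective. -/
theorem alpha_embedding {G : Type*} [Group G] (n : ℕ) (hn : 2 ≤ n)
    (θ : MulAut G) (hθ : θ ^ (n - 1) = 1) :
    (∀ (φ : MulAut G) (u : G), derF n θ (fun _ => u) = u →
      φ * θ * φ⁻¹ * θ⁻¹ = MulAut.conj u →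
        Function.Bijective (alphaMap n θ φ u) ∧
          ∀ p q : ZMod (n - 1) × G,
            alphaMap n θ φ u (sdMul n θ p q) =
              sdMul n θ (alphaMap n θ φ u p) (alphaMap n θ φ u q)) ∧
    (∀ (φ₁ φ₂ φ₃ : MulAut G) (u₁ u₂ u₃ : G),
      derF n θ (fun _ => u₁) = u₁ → derF n θ (fun _ => u₂) = u₂ →
      derF n θ (fun _ => u₃) = u₃ →
      φ₁ * θ * φ₁⁻¹ * θ⁻¹ = MulAut.conj u₁ →
      φ₂ * θ * φ₂⁻¹ * θ⁻¹ = MulAut.conj u₂ →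
      φ₃ * θ * φ₃⁻¹ * θ⁻¹ = MulAut.conj u₃ →
      (∀ x : G, φ₃ x * u₃ = φ₁ (φ₂ x * u₂) * u₁) →
        alphaMap n θ φ₃ u₃ = alphaMap n θ φ₁ u₁ ∘ alphaMap n θ φ₂ u₂) ∧
    (∀ (φ₁ φ₂ : MulAut G) (u₁ u₂ : G),
      derF n θ (fun _ => u₁) = u₁ → derF n θ (fun _ => u₂) = u₂ →
      φ₁ * θ * φ₁⁻¹ * θ⁻¹ = MulAut.conj u₁ →
      φ₂ * θ * φ₂⁻¹ * θ⁻¹ = MulAut.conj u₂ →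
      alphaMap n θ φ₁ u₁ = alphaMap n θ φ₂ u₂ →
        (∀ x : G, φ₁ x * u₁ = φ₂ x * u₂)) := by
  obtain ⟨m, rfl⟩ : ∃ m, n = m + 2 := ⟨n - 2, by omega⟩
  have hθ' : θ ^ (m + 1) = 1 := hθ
  refine ⟨?_, ?_, ?_⟩
  · intro φ u hu h
    have hd := delta_one_of_idem (m + 1) θ u hu
    refine ⟨⟨?_, ?_⟩, ?_⟩
    · rintro ⟨i, x⟩ ⟨j, y⟩ hxy
      simp only [alphaMap, Prod.mk.injEq] at hxy
      obtain ⟨rfl, hxy⟩ := hxy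
      simpa using hxy
    · rintro ⟨i, x⟩
      refine ⟨(i, φ⁻¹ (u * x * (delta θ i.val u)⁻¹ * u⁻¹)), ?_⟩
      simp only [alphaMap, MulAut.apply_inv_self, Prod.mk.injEq, true_and]
      group
    · rintro ⟨i, x⟩ ⟨j, y⟩
      simp only [alphaMap, sdMul, Prod.mk.injEq, true_and]
      have hv : (i + j).val = (i.val + j.val) % (m + 1) := ZMod.val_add (n := m + 1) i j
      rw [hv, delta_mod' (m + 1) θ u hθ' hd, delta_add', map_mul φ, phi_theta_pow θ φ u h]
      simp only [map_mul, map_inv]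
      group
  · intro φ₁ φ₂ φ₃ u₁ u₂ u₃ _ _ _ h₁ _ _ hx
    have hu : u₃ = φ₁ u₂ * u₁ := by simpa using hx 1
    subst hu
    have hφ : ∀ x, φ₃ x = φ₁ (φ₂ x) := by
      intro x
      have := hx x
      rw [map_mul, mul_assoc] at this
      exact mul_right_cancel this
    funext ⟨i, x⟩
    simp only [alphaMap, Function.comp, Prod.mk.injEq, true_and]
    have key := phi_delta θ φ₁ u₁ u₂ h₁ i.val
    have key2 : delta θ i.val (φ₁ u₂ * u₁) = u₁⁻¹ * (φ₁ (delta θ i.val u₂) * u₁ * delta θ i.val u₁) := by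
      rw [key]; group
    rw [key2, hφ]
    simp only [map_mul, map_inv]
    group
  · intro φ₁ φ₂ u₁ u₂ hu₁ hu₂ _ _ hα
    have h0 : ∀ x, u₁⁻¹ * φ₁ x * u₁ = u₂⁻¹ * φ₂ x * u₂ := by
      intro x
      have := congrArg Prod.snd (congrFun hα ((0 : ZMod (m + 1)), x))
      have hv : (0 : ZMod (m + 1)).val = 0 := ZMod.val_zero
      change _ * delta θ (0 : ZMod (m + 1)).val _ = _ * delta θ (0 : ZMod (m + 1)).val _ at this
      simpa only [hv, delta_zero', mul_one] using this
    have hu : u₁ = u₂ := by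
      rcases m with _ | m
      · have e₁ := delta_one_of_idem 1 θ u₁ hu₁
        have e₂ := delta_one_of_idem 1 θ u₂ hu₂
        simp [delta] at e₁ e₂
        rw [e₁, e₂]
      · have := congrArg Prod.snd (congrFun hα ((1 : ZMod (m + 2)), 1))
        have hv : (1 : ZMod (m + 2)).val = 1 := by
          haveI : Fact (1 < m + 2) := ⟨by omega⟩
          exact ZMod.val_one (m + 2)
        change _ * delta θ (1 : ZMod (m + 2)).val _ = _ * delta θ (1 : ZMod (m + 2)).val _ at this
        rw [hv] at this
        simpa [delta] using this
    subst hu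
    intro x
    simpa using h0 x
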